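/- Let q be a power of an odd prime, let n = (q² + 1)/2, and let β be a primitive 2n-th root of unity in F_{q⁴}. For an integer i with 1 ≤ i ≤ (n−1)/2, let C be the negacyclic code of length n over F_{q²} generated by g(x) = M^{(1)}(x)·M^{(3)}(x)·⋯·M^{(2i−1)}(x), where M^{(j)}(x) is the minimal polynomial of β^j over F_{q²}. Then C is an MDS code with parameters [n, n−2i, 2i+1]_{q²}: its dimension over F_{q²} is n−2i and its minimum Hamming distance equals 2i+1. -/

import Mathlib

open Polynomial

/-- The polynomial `c₀ + c₁ x + ⋯ + c_{n-1} x^{n-1}` associated to the vector `c`. -/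
noncomputable def vecPoly {F : Type*} [Semiring F] {n : ℕ} (c : Fin n → F) : F[X] :=
  ∑ k : Fin n, Polynomial.C (c k) * X ^ (k : ℕ)

theorem coeff_vecPoly {F : Type*} [Semiring F] {n : ℕ} (c : Fin n → F) (k : Fin n) :
    (vecPoly c).coeff k = c k := by
  simp [vecPoly, Polynomial.finsetSum_coeff, coeff_X_pow, Fin.val_inj]

theorem vecPoly_injective {F : Type*} [Semiring F] {n : ℕ} :
    Function.Injective (vecPoly : (Fin n → F) → F[X]) := fun a b h => by
  ext k
  rw [← coeff_vecPoly a, h, coeff_vecPoly]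

theorem degree_vecPoly_lt {F : Type*} [Semiring F] {n : ℕ} (c : Fin n → F) :
    (vecPoly c).degree < n := by
  refine (degree_sum_le _ _).trans_lt ?_
  refine (Finset.sup_lt_iff (WithBot.bot_lt_coe n)).2 fun k _ =>
    (degree_C_mul_X_pow_le _ _).trans_lt (WithBot.coe_lt_coe.2 k.2)

theorem vecPoly_coeff_of_degree_lt {F : Type*} [Semiring F] {n : ℕ} {f : F[X]}
    (hf : f.degree < n) : vecPoly (fun k : Fin n => f.coeff k) = f := by
  ext m
  by_cases hm : m < n
  · exact coeff_vecPoly (fun k : Fin n => f.coeff k) ⟨m, hm⟩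
  · have hnm : (n : WithBot ℕ) ≤ m := by exact_mod_cast not_lt.mp hm
    rw [coeff_eq_zero_of_degree_lt (hf.trans_le hnm),
      coeff_eq_zero_of_degree_lt ((degree_vecPoly_lt _).trans_le hnm)]

/-- The code of length `n` generated by a monic polynomial of degree `m ≤ n` has `|F|^(n-m)`
codewords. -/
theorem card_dvd_vecPoly {F : Type*} [Field F] [Fintype F] {n : ℕ} {g : F[X]} (hg : g.Monic)
    (hgn : g.natDegree ≤ n) :
    Nat.card {c : Fin n → F // g ∣ vecPoly c} = Fintype.card F ^ (n - g.natDegree) := by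
  have hdeg : ∀ h : F[X], (g * h).degree < n ↔ h.degree < (n - g.natDegree : ℕ) := by
    intro h
    rcases eq_or_ne h 0 with rfl | hh
    · simp
    · rw [← natDegree_lt_iff_degree_lt (mul_ne_zero hg.ne_zero hh),
        ← natDegree_lt_iff_degree_lt hh, hg.natDegree_mul' hh]
      omega
  let φ : (Fin (n - g.natDegree) → F) → {c : Fin n → F // g ∣ vecPoly c} := fun a =>
    ⟨fun k => (g * vecPoly a).coeff k, by
      rw [vecPoly_coeff_of_degree_lt ((hdeg _).2 (degree_vecPoly_lt a))]
      exact dvd_mul_right _ _⟩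
  have hφ : ∀ a, vecPoly (φ a).1 = g * vecPoly a := fun a =>
    vecPoly_coeff_of_degree_lt ((hdeg _).2 (degree_vecPoly_lt a))
  have hbij : Function.Bijective φ := by
    refine ⟨fun a b hab => ?_, fun ⟨c, h, hc⟩ => ?_⟩
    · apply vecPoly_injective
      apply mul_left_cancel₀ hg.ne_zero
      rw [← hφ, ← hφ, hab]
    · refine ⟨fun k => h.coeff k, Subtype.ext (vecPoly_injective ?_)⟩
      have hh : h.degree < (n - g.natDegree : ℕ) := (hdeg h).1 (hc ▸ degree_vecPoly_lt c)
      rw [hφ, vecPoly_coeff_of_degree_lt hh, hc]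
  rw [← Nat.card_eq_of_bijective φ hbij]
  simp

/-- The BCH bound: a nonzero word of length at most the order of `ζ` whose polynomial vanishes at
the `d` points `δ, δζ, …, δζ^(d-1)` has weight greater than `d`. -/
theorem lt_hammingNorm_of_aeval_eq_zero {F E : Type*} [Field F] [Field E] [Algebra F E]
    [DecidableEq F] {n d : ℕ} {δ ζ : E} (hδ : δ ≠ 0) (hζ : n ≤ orderOf ζ) {c : Fin n → F}
    (hc : c ≠ 0) (h : ∀ j < d, aeval (δ * ζ ^ j) (vecPoly c) = 0) : d < hammingNorm c := by
  by_contra! hd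
  let s : Finset (Fin n) := {k | c k ≠ 0}
  have hs : s.card ≤ d := hd
  let v : Fin s.card → E := fun k => algebraMap F E (c (s.equivFin.symm k)) *
    δ ^ ((s.equivFin.symm k : Fin n) : ℕ)
  let f : Fin s.card → E := fun k => ζ ^ ((s.equivFin.symm k : Fin n) : ℕ)
  have hf : Function.Injective f := by
    intro a b hab
    have := pow_injOn_Iio_orderOf (x := ζ) (lt_of_lt_of_le (Fin.is_lt _) hζ)
      (lt_of_lt_of_le (Fin.is_lt _) hζ) hab
    exact s.equivFin.symm.injective (Subtype.ext (Fin.ext this))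
  have hv : v = 0 := by
    refine Matrix.eq_zero_of_forall_pow_sum_mul_pow_eq_zero hf fun j => ?_
    have hj := h j (j.2.trans_le hs)
    simp only [vecPoly, map_sum, map_mul, aeval_C, map_pow, aeval_X] at hj
    rw [← hj, ← Finset.sum_subset s.subset_univ fun k _ hk => by
        have : c k = 0 := by simpa [s] using hk
        simp [this],
      ← Finset.sum_coe_sort s, ← s.equivFin.symm.sum_comp]
    refine Finset.sum_congr rfl fun k _ => ?_
    simp only [v, f, mul_pow, ← pow_mul]
    rw [mul_comm (j : ℕ)]
    ring
  obtain ⟨k, hk⟩ := Function.ne_iff.mp hc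
  have hks : k ∈ s := by simpa [s] using hk
  have := congrFun hv (s.equivFin ⟨k, hks⟩)
  simp [v, hδ] at this
  exact hk this

theorem hammingNorm_coeff_le {F : Type*} [Semiring F] [DecidableEq F] {n : ℕ} (g : F[X]) :
    hammingNorm (fun k : Fin n => g.coeff k) ≤ g.natDegree + 1 := by
  rw [hammingNorm, ← Finset.card_range (g.natDegree + 1)]
  refine Finset.card_le_card_of_injOn (fun k => (k : ℕ)) (fun k hk => ?_) Fin.val_injective.injOn
  simp only [Finset.coe_filter, Finset.mem_univ, true_and, Set.mem_ofPred_eq] at hk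
  simpa using Nat.lt_succ_of_le (le_natDegree_of_ne_zero hk)

theorem aeval_pow_card_eq_zero {F E : Type*} [Field F] [Fintype F] [Field E] [Algebra F E]
    {f : F[X]} {x : E} (hx : aeval x f = 0) : aeval (x ^ Fintype.card F) f = 0 := by
  have := aeval_algHom_apply (FiniteField.frobeniusAlgHom F E) x f
  rwa [hx, map_zero] at this

theorem natDegree_minpoly_eq_two {F E : Type*} [Field F] [Fintype F] [Field E] [Algebra F E]
    (hdim : Module.finrank F E = 2) {x : E} (hx : x ^ Fintype.card F ≠ x) :
    (minpoly F x).natDegree = 2 := by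
  have : FiniteDimensional F E := Module.finite_of_finrank_pos (by omega)
  have hle := minpoly.natDegree_le (A := F) x
  have hpos := minpoly.natDegree_pos (IsIntegral.of_finite F x)
  have hne : (minpoly F x).natDegree ≠ 1 := by
    intro h
    obtain ⟨y, rfl⟩ := minpoly.natDegree_eq_one_iff.mp h
    exact hx (by rw [← map_pow, FiniteField.pow_card])
  omega

/-- Let `q` be a power of an odd prime, `n = (q² + 1)/2`, and `β` a
primitive `2n`-th root of unity in `E = F_{q⁴}`.  For `1 ≤ i ≤ (n-1)/2`, the
negacyclic code `C` of length `n` over `F = F_{q²}` generated by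
`g = M^{(1)} · M^{(3)} ⋯ M^{(2i-1)}` is an MDS code with parameters
`[n, n-2i, 2i+1]_{q²}`: it has `(q²)^(n-2i)` codewords (dimension `n-2i`) and
minimum Hamming distance exactly `2i + 1`. -/
theorem negacyclic_MDS_half_q2_plus_one_odd (p e q n i : ℕ) (hp : p.Prime)
    (hpodd : Odd p) (he : 0 < e) (hq : q = p ^ e)
    (hn : n = (q ^ 2 + 1) / 2) (hi1 : 1 ≤ i) (hi2 : i ≤ (n - 1) / 2)
    (F E : Type*) [Field F] [Field E] [Algebra F E]
    [Fintype F] [Fintype E] [DecidableEq F]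
    (hF : Fintype.card F = q ^ 2) (hE : Fintype.card E = q ^ 4)
    (β : E) (hβ : orderOf β = 2 * n)
    (g : F[X]) (hg : g = ∏ j ∈ Finset.range i, minpoly F (β ^ (2 * j + 1))) :
    Nat.card {c : Fin n → F // g ∣ vecPoly c} = (q ^ 2) ^ (n - 2 * i) ∧
    (∀ c : Fin n → F, g ∣ vecPoly c → c ≠ 0 → 2 * i + 1 ≤ hammingNorm c) ∧
    (∃ c : Fin n → F, g ∣ vecPoly c ∧ c ≠ 0 ∧ hammingNorm c = 2 * i + 1) := by
  have hqodd : Odd q := hq ▸ hpodd.pow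
  have h2n : 2 * n = q ^ 2 + 1 := by
    have : Even (q ^ 2 + 1) := (hqodd.pow).add_one
    rw [hn, Nat.two_mul_div_two_of_even this]
  have hq2 : 1 < q ^ 2 := hF ▸ Fintype.one_lt_card
  have hnpos : 0 < n := by omega
  have hin : 2 * i < n := by omega
  have hdim : Module.finrank F E = 2 := by
    have h := Module.card_eq_pow_finrank (K := F) (V := E)
    rw [hF, hE, show q ^ 4 = (q ^ 2) ^ 2 by ring] at h
    exact (Nat.pow_right_injective hq2 h).symm
  have : FiniteDimensional F E := Module.finite_of_finrank_pos (by omega)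
  have hβ0 : β ≠ 0 := by
    rintro rfl
    rw [orderOf_zero] at hβ
    omega
  have hfrob : ∀ a, (β ^ a) ^ Fintype.card F * β ^ a = 1 := by
    intro a
    rw [hF, ← pow_succ, ← h2n, ← hβ, ← pow_mul, mul_comm, pow_mul, pow_orderOf_eq_one, one_pow]
  have hdeg : ∀ j ∈ Finset.range i, (minpoly F (β ^ (2 * j + 1))).natDegree = 2 := by
    intro j hj
    rw [Finset.mem_range] at hj
    refine natDegree_minpoly_eq_two hdim fun h => ?_
    have h1 := hfrob (2 * j + 1)
    rw [h, ← pow_add] at h1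
    have := Nat.le_of_dvd (by omega) (hβ ▸ orderOf_dvd_of_pow_eq_one h1)
    omega
  have hmonic : ∀ j ∈ Finset.range i, (minpoly F (β ^ (2 * j + 1))).Monic :=
    fun j _ => minpoly.monic (IsIntegral.of_finite F _)
  have hgm : g.Monic := hg ▸ monic_prod_of_monic _ _ hmonic
  have hgdeg : g.natDegree = 2 * i := by
    rw [hg, natDegree_prod_of_monic _ _ hmonic, Finset.sum_congr rfl hdeg]
    simp [mul_comm]
  have hroot : ∀ j < i, aeval (β ^ (2 * j + 1)) g = 0 := by
    intro j hj
    rw [hg, map_prod]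
    exact Finset.prod_eq_zero (Finset.mem_range.mpr hj) (minpoly.aeval F _)
  have hδ : ((β ^ (2 * i - 1))⁻¹ : E) ≠ 0 := inv_ne_zero (pow_ne_zero _ hβ0)
  have hroots : ∀ j < 2 * i, aeval ((β ^ (2 * i - 1))⁻¹ * (β ^ 2) ^ j) g = 0 := by
    intro j hj
    rcases lt_or_ge j i with hji | hij
    · have h := aeval_pow_card_eq_zero (hroot (i - 1 - j) (by omega))
      rw [eq_inv_of_mul_eq_one_left (hfrob _)] at h
      convert h using 2
      rw [← pow_mul, show 2 * i - 1 = 2 * (i - 1 - j) + 1 + 2 * j by omega, pow_add]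
      field_simp
    · convert hroot (j - i) (by omega) using 2
      rw [← pow_mul, show 2 * j = 2 * i - 1 + (2 * (j - i) + 1) by omega, pow_add _ (2 * i - 1)]
      field_simp
  have hζ : n ≤ orderOf (β ^ 2) := by
    rw [orderOf_pow_of_dvd two_ne_zero (hβ ▸ dvd_mul_right 2 n), hβ]
    omega
  have hmin : ∀ c : Fin n → F, g ∣ vecPoly c → c ≠ 0 → 2 * i + 1 ≤ hammingNorm c :=
    fun c hc hc0 => lt_hammingNorm_of_aeval_eq_zero hδ hζ hc0 fun j hj =>
      aeval_eq_zero_of_dvd_aeval_eq_zero hc (hroots j hj)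
  refine ⟨by rw [card_dvd_vecPoly hgm (by omega), hF, hgdeg], hmin, ?_⟩
  have hvec : vecPoly (fun k : Fin n => g.coeff k) = g := vecPoly_coeff_of_degree_lt <| by
    rw [degree_eq_natDegree hgm.ne_zero, hgdeg]
    exact_mod_cast hin
  have hne : (fun k : Fin n => g.coeff k) ≠ 0 := fun h => hgm.ne_zero <| by
    rw [← hvec, h]
    simp [vecPoly]
  exact ⟨_, dvd_of_eq hvec.symm, hne,
    le_antisymm (hgdeg ▸ hammingNorm_coeff_le g) (hmin _ (dvd_of_eq hvec.symm) hne)⟩
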